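/- Let d ≥ 2 and let b : [−1,1] → [0,∞) be a constant kernel, b ≡ β for some β > 0. Then there exists Λ > d such that LS(Λ, b) holds. -/

import Mathlib

open MeasureTheory
open scoped RealInnerProductSpace

noncomputable section

/-- Euclidean space `ℝ^d`. -/
abbrev E (d : ℕ) : Type := EuclideanSpace ℝ (Fin d)

/-- The unit sphere `S^{d-1}` of `ℝ^d`. -/
abbrev Sph (d : ℕ) : Type := Metric.sphere (0 : E d) 1

/-- The surface measure on the unit sphere, realized as a Hausdorff measure. -/
def sphMeasure (d : ℕ) : Measure (Sph d) := μH[(d : ℝ) - 1]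

open Classical in
/-- The 0-homogeneous extension of a function defined on the unit sphere. -/
def homogExt {d : ℕ} (F : Sph d → ℝ) (x : E d) : ℝ :=
  if hx : x = 0 then 0
  else F ⟨‖x‖⁻¹ • x, by
    rw [mem_sphere_zero_iff_norm, norm_smul, norm_inv, norm_norm,
      inv_mul_cancel₀ (norm_ne_zero_iff.mpr hx)]⟩

/-- Smoothness of a function on the sphere, via its 0-homogeneous extension. -/
def SphSmooth {d : ℕ} (F : Sph d → ℝ) : Prop :=
  ContDiffOn ℝ (⊤ : ℕ∞) (homogExt F) {x : E d | x ≠ 0}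

/-- Spherical gradient: the Euclidean gradient of the 0-homogeneous extension. -/
def sphGrad {d : ℕ} (F : Sph d → ℝ) (σ : Sph d) : E d :=
  gradient (homogExt F) (σ : E d)

/-- Euclidean Laplacian of a function on `ℝ^d`. -/
def lapl {d : ℕ} (f : E d → ℝ) (x : E d) : ℝ :=
  ∑ i : Fin d,
    fderiv ℝ (fun y => fderiv ℝ f y (EuclideanSpace.single i 1)) x (EuclideanSpace.single i 1)

/-- Spherical Laplacian: the Euclidean Laplacian of the 0-homogeneous extension. -/
def sphLap {d : ℕ} (F : Sph d → ℝ) (σ : Sph d) : ℝ :=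
  lapl (homogExt F) (σ : E d)

/-- The spherical linear Boltzmann operator `𝓑` with kernel `b`. -/
def sphB {d : ℕ} (b : ℝ → ℝ) (F : Sph d → ℝ) (σ : Sph d) : ℝ :=
  ∫ (σ' : Sph d), (F σ' - F σ) * b ⟪(σ' : E d), (σ : E d)⟫ ∂(sphMeasure d)

/-- The intertwined iterated carré du champ `Γ²_{𝓑,Δ}(g,g)`. -/
def Gamma2BD {d : ℕ} (b : ℝ → ℝ) (g : Sph d → ℝ) (σ : Sph d) : ℝ :=
  (1 / 2) * sphB b (fun τ => ‖sphGrad g τ‖ ^ 2) σ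
    - ⟪sphGrad g σ, sphGrad (fun τ => sphB b g τ) σ⟫

/-- The iterated carré du champ `Γ²_{Δ,Δ}(g,g)` of the spherical Laplacian. -/
def Gamma2DD {d : ℕ} (g : Sph d → ℝ) (σ : Sph d) : ℝ :=
  (1 / 2) * sphLap (fun τ => ‖sphGrad g τ‖ ^ 2) σ
    - ⟪sphGrad g σ, sphGrad (fun τ => sphLap g τ) σ⟫

/-- A collision kernel: non-negative, measurable, satisfying the Lévy condition. -/
def LevyKernel (d : ℕ) (b : ℝ → ℝ) : Prop :=
  Measurable b ∧ (∀ c ∈ Set.Icc (-1 : ℝ) 1, 0 ≤ b c) ∧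
    ∀ e : Sph d,
      Integrable
        (fun σ' : Sph d => (1 - ⟪(e : E d), (σ' : E d)⟫ ^ 2) * b ⟪(e : E d), (σ' : E d)⟫)
        (sphMeasure d)

/-- The log-Sobolev inequality `LS(Λ, b)` on the sphere. -/
def LS (d : ℕ) (b : ℝ → ℝ) (Λ : ℝ) : Prop :=
  ∀ f : Sph d → ℝ, SphSmooth f → (∀ σ, 0 < f σ) → (∀ σ, f (-σ) = f σ) →
    Λ * ∫ (σ : Sph d), (∫ (σ' : Sph d),
          (f σ' - f σ) ^ 2 / (f σ' + f σ) * b ⟪(σ' : E d), (σ : E d)⟫ ∂(sphMeasure d))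
        ∂(sphMeasure d)
      ≤ ∫ (σ : Sph d), Gamma2BD b (fun τ => Real.log (f τ)) σ * f σ ∂(sphMeasure d)

/-!
On a great circle an even function is `π`-periodic, so Wirtinger's inequality bounds its increments
by its derivative. Averaging over the orthogonal group turns this into the Poincaré inequality
`d ∬ (h σ' - h σ)² ≤ M ∫ |∇h|²` for even `h`, where `M` is the mass of the sphere.

For `b ≡ β` the integral of `Γ²(log f, log f) f` is
`β / 2 * (∫ f * ∫ |∇ log f|² + 4 M ∫ |∇√f|²)`, while
`(f' - f)² / (f' + f) = 2 (√f' - √f)² - (√f' - √f)⁴ / (f' + f)`.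
The Poincaré inequality for `√f` alone therefore gives `Λ = d`. The gain comes from the two terms
this discards: pointwise, `(√f' - √f)²` is bounded by quartic terms and by a multiple of
`(log f' - log f)²`, whose integral the Poincaré inequality for `log f` controls.
-/

section WirtingerIncrements

theorem norm_pow_sub_one_le_of_norm_eq_one {R : Type*} [NormedDivisionRing R] {z : R}
    (hz : ‖z‖ = 1) (n : ℕ) : ‖z ^ n - 1‖ ≤ n * ‖z - 1‖ := by
  induction n with
  | zero => simp
  | succ k ih =>
    calc ‖z ^ (k + 1) - 1‖ = ‖z ^ k * (z - 1) + (z ^ k - 1)‖ := by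
          rw [pow_succ, mul_sub, mul_one, sub_add_sub_cancel]
      _ ≤ ‖z ^ k * (z - 1)‖ + ‖z ^ k - 1‖ := norm_add_le _ _
      _ ≤ ‖z - 1‖ + k * ‖z - 1‖ := by gcongr; simp [hz]
      _ = (k + 1 : ℕ) * ‖z - 1‖ := by push_cast; ring

theorem norm_zpow_sub_one_le_of_norm_eq_one {R : Type*} [NormedDivisionRing R] {z : R}
    (hz : ‖z‖ = 1) (n : ℤ) : ‖z ^ n - 1‖ ≤ |(n : ℝ)| * ‖z - 1‖ := by
  have hz0 : z ≠ 0 := norm_ne_zero_iff.1 (by simp [hz])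
  obtain ⟨k, rfl | rfl⟩ := n.eq_nat_or_neg
  · simpa using norm_pow_sub_one_le_of_norm_eq_one hz k
  · have hinv : (z ^ k)⁻¹ - 1 = (z ^ k)⁻¹ * (1 - z ^ k) := by
      rw [mul_sub, mul_one, inv_mul_cancel₀ (pow_ne_zero k hz0)]
    simpa [hinv, hz, norm_sub_rev] using norm_pow_sub_one_le_of_norm_eq_one hz k

theorem norm_fourier_sub_one_le {T : ℝ} (n : ℤ) (x : AddCircle T) :
    ‖fourier n x - 1‖ ≤ |(n : ℝ)| * ‖fourier 1 x - 1‖ := by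
  have hpow : (fourier n x : ℂ) = fourier 1 x ^ n := by
    rw [fourier_one, fourier_apply, AddCircle.toCircle_zsmul, Circle.coe_zpow]
  rw [hpow]
  exact norm_zpow_sub_one_le_of_norm_eq_one (by rw [fourier_one, Circle.norm_coe]) n

theorem fourierCoeff_comp_add_right {T : ℝ} [Fact (0 < T)] {V : Type*} [NormedAddCommGroup V]
    [NormedSpace ℂ V] (f : AddCircle T → V) (θ : AddCircle T) (n : ℤ) :
    fourierCoeff (fun t => f (t + θ)) n = fourier n θ • fourierCoeff f n := by
  have hchar : ∀ t : AddCircle T, (fourier (-n) t : ℂ) = fourier n θ * fourier (-n) (t + θ) := by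
    intro t
    rw [fourier_apply, fourier_apply, fourier_apply, ← Circle.coe_mul, ← AddCircle.toCircle_add]
    congr 2
    module
  calc fourierCoeff (fun t => f (t + θ)) n
      = ∫ t, fourier n θ • fourier (-n) (t + θ) • f (t + θ) ∂AddCircle.haarAddCircle :=
        integral_congr_ae (.of_forall fun t => by simp only [hchar t, mul_smul])
    _ = fourier n θ • ∫ t, fourier (-n) (t + θ) • f (t + θ) ∂AddCircle.haarAddCircle :=
        integral_smul _ _
    _ = fourier n θ • fourierCoeff f n :=
        congrArg _ (integral_add_right_eq_self (fun t => fourier (-n) t • f t) θ)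

section

variable {a b : ℝ} {U U' : ℝ → ℂ}

theorem fourierCoeffOn_comp_add_right (hab : a < b) (hU : Function.Periodic U (b - a))
    (θ : ℝ) (n : ℤ) :
    fourierCoeffOn hab (fun s => U (s + θ)) n
      = fourier n (θ : AddCircle (b - a)) * fourierCoeffOn hab U n := by
  have : Fact (0 < b - a) := ⟨sub_pos.2 hab⟩
  have hlift : ∀ {W : ℝ → ℂ} (hW : Function.Periodic W (b - a)),
      AddCircle.liftIoc (b - a) a W = hW.lift := fun {W} hW => by
    ext x
    conv_rhs => rw [← (AddCircle.equivIoc (b - a) a).symm_apply_apply x]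
    rfl
  have hUθ : Function.Periodic (fun s => U (s + θ)) (b - a) := fun s => by
    simp only [add_right_comm s, hU (s + θ)]
  have hcomp : hUθ.lift = fun x => hU.lift (x + θ) := by
    ext x
    induction x using QuotientAddGroup.induction_on with
    | H s => rfl
  rw [fourierCoeffOn, fourierCoeffOn, hlift hUθ, hlift hU, hcomp, fourierCoeff_comp_add_right,
    smul_eq_mul]

theorem fourierCoeffOn_sub (hab : a < b) {F G : ℝ → ℂ} (hF : IntervalIntegrable F volume a b)
    (hG : IntervalIntegrable G volume a b) (n : ℤ) :
    fourierCoeffOn hab (fun s => F s - G s) n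
      = fourierCoeffOn hab F n - fourierCoeffOn hab G n := by
  have hchar : Continuous fun s : ℝ => (fourier (-n) (s : AddCircle (b - a)) : ℂ) :=
    (map_continuous _).comp (AddCircle.continuous_mk' _)
  simp only [fourierCoeffOn_eq_integral, smul_sub]
  rw [intervalIntegral.integral_sub (hF.continuousOn_smul hchar.continuousOn)
    (hG.continuousOn_smul hchar.continuousOn), smul_sub]

theorem norm_fourierCoeffOn_eq_of_hasDerivAt (hab : a < b) (hU : ∀ s, HasDerivAt U (U' s) s)
    (hU' : Continuous U') (hper : Function.Periodic U (b - a)) {n : ℤ} (hn : n ≠ 0) :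
    ‖fourierCoeffOn hab U n‖
      = (b - a) / (2 * Real.pi * |(n : ℝ)|) * ‖fourierCoeffOn hab U' n‖ := by
  have hends : U b - U a = 0 := by simpa [sub_eq_zero] using hper a
  rw [fourierCoeffOn_of_hasDerivAt hab hn (fun x _ => hU x) (hU'.intervalIntegrable a b), hends]
  have hba : ‖(b : ℂ) - a‖ = b - a := by
    rw [← Complex.ofReal_sub, Complex.norm_of_nonneg (sub_pos.2 hab).le]
  simp only [mul_zero, zero_sub, norm_mul, norm_neg, norm_div, norm_one, Complex.norm_real,
    Complex.norm_I, Complex.norm_intCast, Complex.norm_ofNat, Real.norm_eq_abs,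
    abs_of_pos Real.pi_pos, hba]
  ring

theorem norm_fourierCoeffOn_increment_le (hab : a < b) (hU : ∀ s, HasDerivAt U (U' s) s)
    (hU' : Continuous U') (hper : Function.Periodic U (b - a)) (θ : ℝ) (n : ℤ) :
    ‖fourierCoeffOn hab (fun s => U (s + θ) - U s) n‖
      ≤ (b - a) / (2 * Real.pi) * ‖fourier 1 (θ : AddCircle (b - a)) - 1‖
        * ‖fourierCoeffOn hab U' n‖ := by
  have hUc : Continuous U := continuous_iff_continuousAt.2 fun s => (hU s).continuousAt
  have hba := sub_pos.2 hab
  have hUθ : Continuous fun s => U (s + θ) := by fun_prop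
  rw [fourierCoeffOn_sub hab (hUθ.intervalIntegrable a b) (hUc.intervalIntegrable a b),
    fourierCoeffOn_comp_add_right hab hper, ← sub_one_mul, norm_mul]
  rcases eq_or_ne n 0 with rfl | hn
  · simp only [fourier_zero, sub_self, norm_zero, zero_mul]
    positivity
  rw [norm_fourierCoeffOn_eq_of_hasDerivAt hab hU hU' hper hn]
  calc _ ≤ |(n : ℝ)| * ‖fourier 1 (θ : AddCircle (b - a)) - 1‖
        * ((b - a) / (2 * Real.pi * |(n : ℝ)|) * ‖fourierCoeffOn hab U' n‖) := by
        gcongr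
        exact norm_fourier_sub_one_le n _
    _ = _ := by field_simp

theorem integral_norm_increment_sq_le (hab : a < b) (hU : ∀ s, HasDerivAt U (U' s) s)
    (hU' : Continuous U') (hper : Function.Periodic U (b - a)) (θ : ℝ) :
    ∫ s in a..b, ‖U (s + θ) - U s‖ ^ 2
      ≤ ((b - a) / (2 * Real.pi) * ‖fourier 1 (θ : AddCircle (b - a)) - 1‖) ^ 2
        * ∫ s in a..b, ‖U' s‖ ^ 2 := by
  have hUc : Continuous U := continuous_iff_continuousAt.2 fun s => (hU s).continuousAt
  have hUθ : Continuous fun s => U (s + θ) - U s := by fun_prop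
  have hmem : ∀ {W : ℝ → ℂ}, Continuous W → MemLp W 2 (volume.restrict (Set.Ioc a b)) :=
    fun hW => (memLp_two_iff_integrable_sq_norm hW.aestronglyMeasurable).2
      (hW.norm.pow 2).integrableOn_Ioc
  have hparseval := hasSum_le (fun n => ?_)
    (hasSum_sq_fourierCoeffOn hab (hmem hUθ))
    ((hasSum_sq_fourierCoeffOn hab (hmem hU')).mul_left
      (((b - a) / (2 * Real.pi) * ‖fourier 1 (θ : AddCircle (b - a)) - 1‖) ^ 2))
  · rw [smul_eq_mul, smul_eq_mul, mul_left_comm] at hparseval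
    exact le_of_mul_le_mul_left hparseval (inv_pos.2 (sub_pos.2 hab))
  · rw [← mul_pow]
    exact pow_le_pow_left₀ (norm_nonneg _)
      (norm_fourierCoeffOn_increment_le hab hU hU' hper θ n) 2

end

theorem integral_increment_sq_le_of_periodic_pi {u u' : ℝ → ℝ}
    (hu : ∀ s, HasDerivAt u (u' s) s) (hu' : Continuous u') (hper : Function.Periodic u Real.pi)
    (θ : ℝ) :
    ∫ s in (0 : ℝ)..Real.pi, (u (s + θ) - u s) ^ 2
      ≤ Real.sin θ ^ 2 * ∫ s in (0 : ℝ)..Real.pi, u' s ^ 2 := by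
  have hfourier : ‖fourier 1 (θ : AddCircle (Real.pi - 0)) - 1‖ = 2 * |Real.sin θ| := by
    have hexp : (fourier 1 (θ : AddCircle (Real.pi - 0)) : ℂ)
        = Complex.exp (Complex.I * ((2 * θ : ℝ) : ℂ)) := by
      have hpi : (Real.pi : ℂ) ≠ 0 := by exact_mod_cast Real.pi_ne_zero
      rw [fourier_coe_apply]
      congr 1
      push_cast
      field_simp
      ring
    rw [hexp, Complex.norm_exp_I_mul_ofReal_sub_one, mul_div_cancel_left₀ _ two_ne_zero, norm_mul,
      Real.norm_two, Real.norm_eq_abs]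
  have hconst : ((Real.pi - 0) / (2 * Real.pi) * (2 * |Real.sin θ|)) ^ 2 = Real.sin θ ^ 2 := by
    have := Real.pi_ne_zero
    rw [← sq_abs (Real.sin θ), sub_zero]
    field_simp
  have hperC : Function.Periodic (fun s => (u s : ℂ)) (Real.pi - 0) := fun s => by
    simp [hper s]
  have hle := integral_norm_increment_sq_le Real.pi_pos (fun s => (hu s).ofReal_comp)
    (Complex.continuous_ofReal.comp hu') hperC θ
  simpa only [← Complex.ofReal_sub, Complex.norm_real, Real.norm_eq_abs, sq_abs, hfourier, hconst]
    using hle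

end WirtingerIncrements

section OrbitAverage

theorem integrable_of_continuous_of_compactSpace {X : Type*} [TopologicalSpace X] [CompactSpace X]
    [MeasurableSpace X] [OpensMeasurableSpace X] (μ : Measure X) [IsFiniteMeasureOnCompacts μ]
    {F : X → ℝ} (hF : Continuous F) : Integrable F μ :=
  hF.integrable_of_hasCompactSupport (HasCompactSupport.of_compactSpace F)

variable {G Y : Type*} [Group G] [TopologicalSpace G] [MeasurableSpace G] [BorelSpace G]
  [MulAction G Y]

theorem integral_smul_eq_of_mem_orbit [ContinuousMul G] (ν : Measure G) [ν.IsMulRightInvariant]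
    (F : Y → ℝ) {y z : Y} (hz : z ∈ MulAction.orbit G y) :
    ∫ g : G, F (g • z) ∂ν = ∫ g : G, F (g • y) ∂ν := by
  obtain ⟨k, rfl⟩ := hz
  simpa only [smul_smul] using integral_mul_right_eq_self (fun g => F (g • y)) k

variable [TopologicalSpace Y] [CompactSpace Y] [ContinuousSMul G Y] {F : Y → ℝ}

theorem sub_mul_integral_smul_eq_of_mem_orbit [ContinuousMul G] (ν : Measure G)
    [ν.IsMulRightInvariant] [IsFiniteMeasure ν] (hF : Continuous F) {c : ℝ → Y}
    (hc : Continuous c) {y : Y} (horbit : ∀ s, c s ∈ MulAction.orbit G y) (a b : ℝ) :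
    (b - a) * ∫ g : G, F (g • y) ∂ν = ∫ g : G, (∫ s in a..b, F (g • c s)) ∂ν := by
  have hcont : Continuous (Function.uncurry fun (s : ℝ) (g : G) => F (g • c s)) :=
    hF.comp (continuous_snd.smul (hc.comp continuous_fst))
  obtain ⟨C, hC⟩ := isCompact_univ.exists_bound_of_continuousOn hF.continuousOn
  have hint : Integrable (Function.uncurry fun (s : ℝ) (g : G) => F (g • c s))
      ((volume.restrict (Set.Ioc (min a b) (max a b))).prod ν) :=
    Integrable.of_bound hcont.aestronglyMeasurable C (.of_forall fun p => hC _ (Set.mem_univ _))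
  rw [← intervalIntegral_integral_swap hint]
  simp only [integral_smul_eq_of_mem_orbit ν F (horbit _), intervalIntegral.integral_const,
    smul_eq_mul]

variable [CompactSpace G] [MeasurableSpace Y] [BorelSpace Y]

theorem integral_integral_smul (ν : Measure G) [IsFiniteMeasureOnCompacts ν] (μ : Measure Y)
    [IsFiniteMeasureOnCompacts μ] [SMulInvariantMeasure G Y μ] (hF : Continuous F) :
    ∫ y, ∫ g : G, F (g • y) ∂ν ∂μ = ν.real Set.univ * ∫ y, F y ∂μ := by
  have hcont : Continuous (Function.uncurry fun (y : Y) (g : G) => F (g • y)) :=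
    hF.comp (continuous_snd.smul continuous_fst)
  rw [integral_integral_swap_of_hasCompactSupport hcont (HasCompactSupport.of_compactSpace _)]
  simp only [integral_smul_eq_self F, integral_const, smul_eq_mul]

end OrbitAverage

theorem integral_nonneg_of_forall_exists_orbit_curve {G Y : Type*} [Group G] [TopologicalSpace G]
    [IsTopologicalGroup G] [CompactSpace G] [MulAction G Y] [TopologicalSpace Y] [CompactSpace Y]
    [MeasurableSpace Y] [BorelSpace Y] [ContinuousSMul G Y] (μ : Measure Y)
    [IsFiniteMeasureOnCompacts μ] [SMulInvariantMeasure G Y μ] {F : Y → ℝ} (hF : Continuous F)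
    {a b : ℝ} (hab : a < b)
    (h : ∀ y, ∃ c : ℝ → Y, Continuous c ∧ (∀ s, c s ∈ MulAction.orbit G y) ∧
      ∀ g : G, 0 ≤ ∫ s in a..b, F (g • c s)) :
    0 ≤ ∫ y, F y ∂μ := by
  borelize G
  -- Mathlib lacks unimodularity of compact groups, but the inverse of a left Haar measure is
  -- right invariant by construction.
  let ν : Measure G := (Measure.haar : Measure G).inv
  have : IsFiniteMeasure ν := ⟨by
    rw [Measure.inv_apply, Set.inv_univ]
    exact measure_lt_top _ _⟩
  have hν : 0 < ν.real Set.univ := by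
    rw [measureReal_def, Measure.inv_apply, Set.inv_univ]
    exact ENNReal.toReal_pos (NeZero.ne _) (measure_ne_top _ _)
  have horbit : ∀ y, 0 ≤ ∫ g : G, F (g • y) ∂ν := fun y => by
    obtain ⟨c, hc, hcy, hnonneg⟩ := h y
    refine nonneg_of_mul_nonneg_right ?_ (sub_pos.2 hab)
    rw [sub_mul_integral_smul_eq_of_mem_orbit ν hF hc hcy a b]
    exact integral_nonneg hnonneg
  refine nonneg_of_mul_nonneg_right ?_ hν
  rw [← integral_integral_smul ν μ hF]
  exact integral_nonneg horbit

section HausdorffMeasureSphere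

open Module

variable {V : Type*} [NormedAddCommGroup V] [InnerProductSpace ℝ V]

theorem exists_lipschitzOnWith_stereoInvFun [FiniteDimensional ℝ V] {v : V} (hv : ‖v‖ = 1)
    {s : Set (ℝ ∙ v)ᗮ} (hs : IsCompact s) : ∃ K, LipschitzOnWith K (stereoInvFun hv) s := by
  have hsmooth : ContDiff ℝ 1 fun w : (ℝ ∙ v)ᗮ => (stereoInvFun hv w : V) :=
    contDiff_stereoInvFunAux.comp (ℝ ∙ v)ᗮ.subtypeL.contDiff
  exact hsmooth.locallyLipschitz.locallyLipschitzOn.exists_lipschitzOnWith_of_compact hs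

theorem isFiniteMeasure_hausdorffMeasure_sphere [FiniteDimensional ℝ V] [MeasurableSpace V]
    [BorelSpace V] {n : ℕ} (hn : finrank ℝ V = n + 1) :
    IsFiniteMeasure (μH[n] : Measure (Metric.sphere (0 : V) 1)) := by
  have : Fact (finrank ℝ V = n + 1) := ⟨hn⟩
  rw [isFiniteMeasure_iff_isFiniteMeasureOnCompacts_of_compactSpace]
  suffices IsLocallyFiniteMeasure (μH[n] : Measure (Metric.sphere (0 : V) 1)) from inferInstance
  refine ⟨fun σ => ?_⟩
  have hσ : ‖-(σ : V)‖ = 1 := by simp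
  set φ := stereographic hσ
  have hmem : σ ∈ φ.source := by
    rw [stereographic_source]
    exact ne_neg_of_mem_unit_sphere ℝ σ
  refine ⟨φ.symm '' Metric.closedBall (φ σ) 1, ?_, ?_⟩
  · rw [← φ.symm_map_nhds_eq hmem]
    exact Filter.image_mem_map (Metric.closedBall_mem_nhds _ one_pos)
  · obtain ⟨K, hK⟩ := exists_lipschitzOnWith_stereoInvFun hσ (isCompact_closedBall (φ σ) 1)
    have hrank : finrank ℝ (ℝ ∙ (-(σ : V)))ᗮ = n :=
      Submodule.finrank_orthogonal_span_singleton (neg_ne_zero.2 (ne_zero_of_mem_unit_sphere σ))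
    refine (hK.hausdorffMeasure_image_le n.cast_nonneg).trans_lt ?_
    rw [← hrank]
    exact ENNReal.mul_lt_top (by simp) (isCompact_closedBall _ _).measure_lt_top

end HausdorffMeasureSphere

instance (d : ℕ) : IsFiniteMeasure (sphMeasure d) := by
  rcases d with _ | n
  · exact ⟨by simp [Set.univ_eq_empty_iff.2 (inferInstance : IsEmpty (Sph 0))]⟩
  · rw [sphMeasure, Nat.cast_succ, add_sub_cancel_right]
    exact isFiniteMeasure_hausdorffMeasure_sphere finrank_euclideanSpace_fin

section OrthogonalGroup

variable {V : Type*} [NormedAddCommGroup V] [InnerProductSpace ℝ V] [FiniteDimensional ℝ V]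

theorem exists_linearIsometryEquiv_map_orthonormal {ι : Type*} {v w : ι → V} (hv : Orthonormal ℝ v)
    (hw : Orthonormal ℝ w) : ∃ g : V ≃ₗᵢ[ℝ] V, ∀ i, g (v i) = w i := by
  set b := Module.Basis.span hv.linearIndependent
  have hb : ∀ i, (b i : V) = v i := fun i => congrArg _ (Module.Basis.span_apply _ i)
  have hb_orth : Orthonormal ℝ b := by
    rw [← (Submodule.span ℝ (Set.range v)).subtypeₗᵢ.orthonormal_comp_iff]
    simpa [Function.comp_def, hb] using hv
  set L := (b.constr ℝ w).isometryOfOrthonormal hb_orth (by simpa [Function.comp_def] using hw)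
  refine ⟨L.extend.toLinearIsometryEquiv rfl, fun i => ?_⟩
  have := L.extend_apply (b i)
  simpa [L, hb] using this

end OrthogonalGroup

/-- The orthogonal group of `ℝ^d`, as the unitary elements of the algebra of endomorphisms: this
encoding provides the group structure and the topology. -/
def OrthGroup (d : ℕ) : Type := unitary (E d →L[ℝ] E d)

namespace OrthGroup

variable {d : ℕ}

instance : ContinuousStar (E d →L[ℝ] E d) :=
  ⟨(ContinuousLinearMap.adjoint (𝕜 := ℝ) (E := E d) (F := E d)).continuous⟩

instance : Group (OrthGroup d) := inferInstanceAs (Group (unitary _))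

instance : TopologicalSpace (OrthGroup d) := inferInstanceAs (TopologicalSpace (unitary _))

instance : IsTopologicalGroup (OrthGroup d) := inferInstanceAs (IsTopologicalGroup (unitary _))

instance : CompactSpace (OrthGroup d) := by
  have : ProperSpace (E d →L[ℝ] E d) := FiniteDimensional.proper ℝ _
  refine isCompact_iff_compactSpace.1 (Metric.isCompact_of_isClosed_isBounded isClosed_unitary ?_)
  refine (Metric.isBounded_closedBall (x := 0) (r := 1)).subset fun u hu => ?_
  rw [mem_closedBall_zero_iff]
  exact ContinuousLinearMap.opNorm_le_bound _ zero_le_one fun x => by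
    rw [one_mul]
    exact ((Unitary.linearIsometryEquiv ⟨u, hu⟩).norm_map x).le

/-- Orthogonal transformations as linear isometries. -/
def toLinearIsometryEquiv : OrthGroup d ≃* (E d ≃ₗᵢ[ℝ] E d) := Unitary.linearIsometryEquiv

instance : MulAction (OrthGroup d) (Sph d) where
  smul g σ := ⟨toLinearIsometryEquiv g σ, by simp⟩
  one_smul σ := by ext1; change toLinearIsometryEquiv 1 (σ : E d) = σ; simp
  mul_smul g k σ := by
    ext1
    change toLinearIsometryEquiv (g * k) (σ : E d) = _
    rw [map_mul]
    rfl

theorem coe_smul (g : OrthGroup d) (σ : Sph d) :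
    ((g • σ : Sph d) : E d) = toLinearIsometryEquiv g (σ : E d) := rfl

theorem smul_neg (g : OrthGroup d) (σ : Sph d) : g • (-σ) = -(g • σ) := by
  ext1
  simp [coe_smul]

theorem exists_coe_smul_eq (g : E d ≃ₗᵢ[ℝ] E d) :
    ∃ a : OrthGroup d, ∀ σ : Sph d, ((a • σ : Sph d) : E d) = g σ :=
  ⟨toLinearIsometryEquiv.symm g, fun σ => by
    rw [coe_smul, MulEquiv.apply_symm_apply]⟩

instance : IsIsometricSMul (OrthGroup d) (Sph d) :=
  ⟨fun g => (toLinearIsometryEquiv g).isometry.comp isometry_subtype_coe⟩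

instance : ContinuousSMul (OrthGroup d) (Sph d) where
  continuous_smul := Continuous.subtype_mk
    ((continuous_subtype_val.comp continuous_fst).clm_apply
      (continuous_subtype_val.comp continuous_snd)) _

instance : SMulInvariantMeasure (OrthGroup d) (Sph d) (sphMeasure d) :=
  inferInstanceAs (SMulInvariantMeasure (OrthGroup d) (Sph d) μH[_])

end OrthGroup

instance {G X : Type*} [SMul G X] [MeasurableSpace X] [MeasurableConstSMul G X] (μ : Measure X)
    [SFinite μ] [SMulInvariantMeasure G X μ] : SMulInvariantMeasure G (X × X) (μ.prod μ) :=
  ⟨fun g _ hs => ((measurePreserving_smul g μ).prod (measurePreserving_smul g μ)).measure_preimage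
    hs.nullMeasurableSet⟩

section SecondMoment

variable {d : ℕ}

theorem integral_inner_sq_eq_of_norm_eq {v w : E d} (h : ‖v‖ = ‖w‖) :
    ∫ σ : Sph d, ⟪v, (σ : E d)⟫ ^ 2 ∂(sphMeasure d)
      = ∫ σ : Sph d, ⟪w, (σ : E d)⟫ ^ 2 ∂(sphMeasure d) := by
  obtain ⟨g, hg⟩ : ∃ g : E d ≃ₗᵢ[ℝ] E d, g v = w := ⟨_, Submodule.reflection_sub h⟩
  obtain ⟨a, ha⟩ := OrthGroup.exists_coe_smul_eq g
  rw [← integral_smul_eq_self (fun σ : Sph d => ⟪w, (σ : E d)⟫ ^ 2) (g := a)]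
  simp only [ha, ← hg, g.inner_map_map]

theorem natCast_mul_integral_inner_sq (v : E d) :
    d * ∫ σ : Sph d, ⟪v, (σ : E d)⟫ ^ 2 ∂(sphMeasure d)
      = (sphMeasure d).real Set.univ * ‖v‖ ^ 2 := by
  have hcoord (σ : Sph d) :
      ∑ i, ⟪(EuclideanSpace.single i ‖v‖ : E d), (σ : E d)⟫ ^ 2 = ‖v‖ ^ 2 := by
    have hσ : ∑ i, (σ : E d) i ^ 2 = 1 := by simp [← EuclideanSpace.real_norm_sq_eq]
    simp [EuclideanSpace.inner_single_left, mul_pow, ← Finset.mul_sum, hσ]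
  calc d * ∫ σ : Sph d, ⟪v, (σ : E d)⟫ ^ 2 ∂(sphMeasure d)
      = ∑ i : Fin d, ∫ σ : Sph d,
          ⟪(EuclideanSpace.single i ‖v‖ : E d), (σ : E d)⟫ ^ 2 ∂(sphMeasure d) := by
        rw [Finset.sum_congr rfl fun i _ => (integral_inner_sq_eq_of_norm_eq
          (v := v) (w := EuclideanSpace.single i ‖v‖) (by simp)).symm]
        simp
    _ = ∫ _ : Sph d, ‖v‖ ^ 2 ∂(sphMeasure d) := by
        rw [← integral_finsetSum _ fun i _ =>
          integrable_of_continuous_of_compactSpace _ (by fun_prop)]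
        simp only [hcoord]
    _ = (sphMeasure d).real Set.univ * ‖v‖ ^ 2 := by rw [integral_const, smul_eq_mul]

end SecondMoment

section HomogeneousExtension

variable {d : ℕ} (F : Sph d → ℝ)

@[simp]
theorem homogExt_coe (σ : Sph d) : homogExt F (σ : E d) = F σ := by
  rw [homogExt, dif_neg (ne_zero_of_mem_unit_sphere σ)]
  congr 1
  ext1
  simp

theorem homogExt_smul {t : ℝ} (ht : 0 < t) {x : E d} (hx : x ≠ 0) :
    homogExt F (t • x) = homogExt F x := by
  rw [homogExt, homogExt, dif_neg hx, dif_neg (smul_ne_zero ht.ne' hx)]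
  congr 2
  rw [norm_smul, Real.norm_of_nonneg ht.le, smul_smul]
  congr 1
  field_simp

theorem homogExt_comp (φ : ℝ → ℝ) {x : E d} (hx : x ≠ 0) :
    homogExt (fun τ => φ (F τ)) x = φ (homogExt F x) := by
  rw [homogExt, homogExt, dif_neg hx, dif_neg hx]

theorem exists_homogExt_eq {x : E d} (hx : x ≠ 0) : ∃ σ, homogExt F x = F σ :=
  ⟨_, by rw [homogExt, dif_neg hx]⟩

end HomogeneousExtension

namespace SphSmooth

variable {d : ℕ} {F : Sph d → ℝ}

theorem contDiffAt (hF : SphSmooth F) {x : E d} (hx : x ≠ 0) :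
    ContDiffAt ℝ (⊤ : ℕ∞) (homogExt F) x :=
  ContDiffOn.contDiffAt hF (isOpen_ne.mem_nhds hx)

theorem hasGradientAt (hF : SphSmooth F) (σ : Sph d) :
    HasGradientAt (homogExt F) (sphGrad F σ) (σ : E d) :=
  ((hF.contDiffAt (ne_zero_of_mem_unit_sphere σ)).differentiableAt (by simp)).hasGradientAt

theorem continuous (hF : SphSmooth F) : Continuous F := by
  have h : Continuous fun σ : Sph d => homogExt F (σ : E d) :=
    continuous_iff_continuousAt.2 fun σ =>
      ContinuousAt.comp (f := fun σ : Sph d => (σ : E d))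
        (hF.hasGradientAt σ).continuousAt continuous_subtype_val.continuousAt
  simpa only [homogExt_coe] using h

theorem continuous_sphGrad (hF : SphSmooth F) : Continuous (sphGrad F) := by
  have h (σ : Sph d) : ContinuousAt (fun x : E d => gradient (homogExt F) x) (σ : E d) :=
    (InnerProductSpace.toDual ℝ (E d)).symm.continuous.continuousAt.comp
      ((hF.contDiffAt (ne_zero_of_mem_unit_sphere σ)).fderiv_right (m := 0)
        (by simp)).continuousAt
  exact continuous_iff_continuousAt.2 fun σ =>
    ContinuousAt.comp (f := fun σ : Sph d => (σ : E d)) (h σ) continuous_subtype_val.continuousAt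

theorem comp (hF : SphSmooth F) {φ : ℝ → ℝ} (hφ : ∀ σ, ContDiffAt ℝ (⊤ : ℕ∞) φ (F σ)) :
    SphSmooth fun τ => φ (F τ) := by
  intro x hx
  obtain ⟨σ, hσ⟩ := exists_homogExt_eq F hx
  have h : ContDiffAt ℝ (⊤ : ℕ∞) φ (homogExt F x) := hσ ▸ hφ σ
  exact (h.comp x (hF.contDiffAt hx)).contDiffWithinAt.congr
    (fun y hy => homogExt_comp F φ hy) (homogExt_comp F φ hx)

theorem sphGrad_comp (hF : SphSmooth F) {φ : ℝ → ℝ} {φ' : ℝ} {σ : Sph d}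
    (hφ : HasDerivAt φ φ' (F σ)) :
    sphGrad (fun τ => φ (F τ)) σ = φ' • sphGrad F σ := by
  refine HasGradientAt.gradient (hasGradientAt_iff_hasFDerivAt.2 ?_)
  rw [← homogExt_coe F σ] at hφ
  rw [map_smul]
  refine (hφ.comp_hasFDerivAt (σ : E d) (hF.hasGradientAt σ).hasFDerivAt).congr_of_eventuallyEq ?_
  filter_upwards [isOpen_ne.mem_nhds (ne_zero_of_mem_unit_sphere σ)] with x hx
  exact homogExt_comp F φ hx

theorem inner_sphGrad_self (hF : SphSmooth F) (σ : Sph d) : ⟪sphGrad F σ, (σ : E d)⟫ = 0 := by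
  have hgrad := (hF.hasGradientAt σ).hasFDerivAt
  rw [← one_smul ℝ (σ : E d)] at hgrad
  have hray := hgrad.comp_hasDerivAt (1 : ℝ) ((hasDerivAt_id (1 : ℝ)).smul_const (σ : E d))
  have hconst : HasDerivAt (homogExt F ∘ fun t : ℝ => t • (σ : E d)) 0 1 := by
    refine (hasDerivAt_const (1 : ℝ) (homogExt F (σ : E d))).congr_of_eventuallyEq ?_
    filter_upwards [Ioi_mem_nhds (zero_lt_one' ℝ)] with t ht
    exact homogExt_smul F ht (ne_zero_of_mem_unit_sphere σ)
  simpa using hray.unique hconst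

end SphSmooth

section UnitCircle

variable {V : Type*} [NormedAddCommGroup V] [InnerProductSpace ℝ V]

theorem orthonormal_vecPair {v w : V} (hv : ‖v‖ = 1) (hw : ‖w‖ = 1) (hvw : ⟪v, w⟫ = 0) :
    Orthonormal ℝ ![v, w] := by
  refine ⟨Fin.forall_fin_two.2 ⟨hv, hw⟩, fun i j hij => ?_⟩
  fin_cases i <;> fin_cases j <;> simp_all [real_inner_comm]

theorem norm_cos_smul_add_sin_smul {v w : V} (hv : ‖v‖ = 1) (hw : ‖w‖ = 1) (hvw : ⟪v, w⟫ = 0)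
    (s : ℝ) : ‖Real.cos s • v + Real.sin s • w‖ = 1 := by
  have : ‖Real.cos s • v + Real.sin s • w‖ ^ 2 = 1 := by
    rw [norm_add_sq_real, norm_smul, norm_smul, hv, hw, inner_smul_left, inner_smul_right, hvw]
    simp
  exact (pow_eq_one_iff_of_nonneg (norm_nonneg _) two_ne_zero).1 this

theorem exists_eq_cos_smul_add_sin_smul {x y : V} (hx : ‖x‖ = 1) (hy : ‖y‖ = 1) (hne : y ≠ x)
    (hne_neg : y ≠ -x) :
    ∃ (w : V) (θ : ℝ), ‖w‖ = 1 ∧ ⟪x, w⟫ = 0 ∧ y = Real.cos θ • x + Real.sin θ • w := by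
  set θ := Real.arccos ⟪x, y⟫
  have hlt : ⟪x, y⟫ < 1 := (inner_lt_one_iff_real_of_norm_eq_one hx hy).2 hne.symm
  have hgt : -1 < ⟪x, y⟫ := by
    rw [neg_lt, ← inner_neg_left]
    exact (inner_lt_one_iff_real_of_norm_eq_one (by rwa [norm_neg]) hy).2 hne_neg.symm
  have hcos : Real.cos θ = ⟪x, y⟫ := Real.cos_arccos hgt.le hlt.le
  have hsin : 0 < Real.sin θ :=
    Real.sin_pos_of_mem_Ioo ⟨Real.arccos_pos.2 hlt, Real.arccos_lt_pi.2 hgt⟩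
  have hnorm : ‖y - Real.cos θ • x‖ = Real.sin θ := by
    rw [← sq_eq_sq₀ (norm_nonneg _) hsin.le, norm_sub_sq_real, norm_smul, hx, hy,
      real_inner_smul_right, real_inner_comm, ← hcos, Real.sin_sq]
    simp only [Real.norm_eq_abs, mul_one, sq_abs]
    ring
  refine ⟨(Real.sin θ)⁻¹ • (y - Real.cos θ • x), θ, ?_, ?_, ?_⟩
  · rw [norm_smul, hnorm, norm_inv, Real.norm_of_nonneg hsin.le, inv_mul_cancel₀ hsin.ne']
  · rw [real_inner_smul_right, inner_sub_right, real_inner_smul_right,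
      real_inner_self_eq_norm_sq, hx, hcos]
    ring
  · rw [smul_inv_smul₀ hsin.ne', add_sub_cancel]

end UnitCircle

/-- The great circle `s ↦ cos s • v + sin s • w` through two orthogonal points of the sphere. -/
def greatCircle {d : ℕ} (v w : Sph d) (hvw : ⟪(v : E d), (w : E d)⟫ = 0) (s : ℝ) : Sph d :=
  ⟨Real.cos s • (v : E d) + Real.sin s • (w : E d), mem_sphere_zero_iff_norm.2
    (norm_cos_smul_add_sin_smul (norm_eq_of_mem_sphere v) (norm_eq_of_mem_sphere w) hvw s)⟩

section GreatCircle

variable {d : ℕ} {v w : Sph d} (hvw : ⟪(v : E d), (w : E d)⟫ = 0)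

theorem coe_greatCircle (s : ℝ) : (greatCircle v w hvw s : E d)
    = Real.cos s • (v : E d) + Real.sin s • (w : E d) := rfl

theorem greatCircle_zero : greatCircle v w hvw 0 = v := by
  ext1
  simp [coe_greatCircle]

theorem greatCircle_add_pi (s : ℝ) :
    greatCircle v w hvw (s + Real.pi) = -greatCircle v w hvw s := by
  ext1
  simp only [coe_greatCircle, coe_neg_sphere, Real.cos_add_pi, Real.sin_add_pi, neg_smul, neg_add]

theorem coe_greatCircle_add (s θ : ℝ) : (greatCircle v w hvw (s + θ) : E d)
    = Real.cos θ • (greatCircle v w hvw s : E d)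
      + Real.sin θ • (greatCircle v w hvw (s + Real.pi / 2) : E d) := by
  simp only [coe_greatCircle, Real.cos_add, Real.sin_add, Real.cos_pi_div_two,
    Real.sin_pi_div_two]
  module

theorem inner_greatCircle_add_pi_div_two (s : ℝ) : ⟪(greatCircle v w hvw s : E d),
    (greatCircle v w hvw (s + Real.pi / 2) : E d)⟫ = 0 := by
  simp only [coe_greatCircle, Real.cos_add_pi_div_two, Real.sin_add_pi_div_two, inner_add_left,
    inner_add_right, real_inner_smul_left, real_inner_smul_right, real_inner_self_eq_norm_sq,
    norm_eq_of_mem_sphere, real_inner_comm (v : E d) (w : E d), hvw]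
  ring

theorem continuous_greatCircle : Continuous (greatCircle v w hvw) :=
  Continuous.subtype_mk (by fun_prop) _

theorem hasDerivAt_coe_greatCircle (s : ℝ) : HasDerivAt (fun s => (greatCircle v w hvw s : E d))
    (greatCircle v w hvw (s + Real.pi / 2) : E d) s := by
  rw [coe_greatCircle, Real.cos_add_pi_div_two, Real.sin_add_pi_div_two]
  exact ((Real.hasDerivAt_cos s).smul_const _).add ((Real.hasDerivAt_sin s).smul_const _)

theorem inner_smul_smul_sph (g : OrthGroup d) (σ τ : Sph d) :
    ⟪((g • σ : Sph d) : E d), ((g • τ : Sph d) : E d)⟫ = ⟪(σ : E d), (τ : E d)⟫ := by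
  simp only [OrthGroup.coe_smul, LinearIsometryEquiv.inner_map_map]

theorem smul_greatCircle (g : OrthGroup d) (s : ℝ) : g • greatCircle v w hvw s
    = greatCircle (g • v) (g • w) ((inner_smul_smul_sph g v w).trans hvw) s := by
  ext1
  simp only [OrthGroup.coe_smul, coe_greatCircle, map_add, map_smul]

theorem exists_smul_greatCircle_eq_add (s : ℝ) :
    ∃ g : OrthGroup d, ∀ t, g • greatCircle v w hvw t = greatCircle v w hvw (s + t) := by
  obtain ⟨g, hg⟩ := exists_linearIsometryEquiv_map_orthonormal
    (orthonormal_vecPair (norm_eq_of_mem_sphere v) (norm_eq_of_mem_sphere w) hvw)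
    (orthonormal_vecPair (norm_eq_of_mem_sphere _) (norm_eq_of_mem_sphere _)
      (inner_greatCircle_add_pi_div_two hvw s))
  have hv : g v = greatCircle v w hvw s := hg 0
  have hw : g w = greatCircle v w hvw (s + Real.pi / 2) := hg 1
  obtain ⟨a, ha⟩ := OrthGroup.exists_coe_smul_eq g
  refine ⟨a, fun t => ?_⟩
  ext1
  rw [ha, coe_greatCircle_add, coe_greatCircle, map_add, map_smul, map_smul, hv, hw]

theorem exists_greatCircle_eq {σ σ' : Sph d} (hne : σ' ≠ σ) (hne_neg : σ' ≠ -σ) :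
    ∃ (w : Sph d) (hw : ⟪(σ : E d), (w : E d)⟫ = 0) (θ : ℝ), greatCircle σ w hw θ = σ' := by
  obtain ⟨w, θ, hw, hσw, hσ'⟩ := exists_eq_cos_smul_add_sin_smul (norm_eq_of_mem_sphere σ)
    (norm_eq_of_mem_sphere σ') (Subtype.coe_injective.ne hne)
    (Subtype.coe_injective.ne hne_neg)
  exact ⟨⟨w, mem_sphere_zero_iff_norm.2 hw⟩, hσw, θ, Subtype.ext hσ'.symm⟩

theorem SphSmooth.integral_sub_greatCircle_sq_le {h : Sph d → ℝ} (hh : SphSmooth h)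
    (heven : ∀ σ, h (-σ) = h σ) (θ : ℝ) :
    ∫ s in (0 : ℝ)..Real.pi, (h (greatCircle v w hvw (s + θ)) - h (greatCircle v w hvw s)) ^ 2
      ≤ ∫ s in (0 : ℝ)..Real.pi, ⟪sphGrad h (greatCircle v w hvw s),
          (greatCircle v w hvw (s + θ) : E d)⟫ ^ 2 := by
  set γ := greatCircle v w hvw
  have hderiv (s : ℝ) : HasDerivAt (fun s => h (γ s))
      ⟪sphGrad h (γ s), (γ (s + Real.pi / 2) : E d)⟫ s := by
    simpa [Function.comp_def] using
      (hh.hasGradientAt (γ s)).hasFDerivAt.comp_hasDerivAt s (hasDerivAt_coe_greatCircle hvw s)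
  have hγ : Continuous γ := continuous_greatCircle hvw
  have hcont : Continuous fun s => ⟪sphGrad h (γ s), (γ (s + Real.pi / 2) : E d)⟫ :=
    (hh.continuous_sphGrad.comp hγ).inner (by fun_prop)
  have hperiodic : Function.Periodic (fun s => h (γ s)) Real.pi := fun s => by
    simp only [γ, greatCircle_add_pi, heven]
  have hinner (s : ℝ) : ⟪sphGrad h (γ s), (γ (s + θ) : E d)⟫
      = Real.sin θ * ⟪sphGrad h (γ s), (γ (s + Real.pi / 2) : E d)⟫ := by
    rw [coe_greatCircle_add, inner_add_right, real_inner_smul_right, real_inner_smul_right,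
      hh.inner_sphGrad_self, mul_zero, zero_add]
  simpa only [hinner, mul_pow, intervalIntegral.integral_const_mul] using
    integral_increment_sq_le_of_periodic_pi hderiv hcont hperiodic θ

end GreatCircle

/-- The variance functional `∬ (x s - x t)² dμ(s) dμ(t)`, without normalisation by the mass. -/
def pairVariance {X : Type*} [MeasurableSpace X] (μ : Measure X) (x : X → ℝ) : ℝ :=
  ∫ p, (x p.1 - x p.2) ^ 2 ∂(μ.prod μ)

/-- The Dirichlet energy of a function on the sphere. -/
def dirichletEnergy {d : ℕ} (F : Sph d → ℝ) : ℝ :=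
  ∫ σ, ‖sphGrad F σ‖ ^ 2 ∂(sphMeasure d)

section Poincare

variable {d : ℕ} {h : Sph d → ℝ}

/-- The integrand of the Poincaré deficit `M 𝓔(h) / d - ∬ (h σ' - h σ)²`, where `M` is the mass of
the sphere: the energy is written as a double integral by averaging `⟪∇h σ, σ'⟫²` over `σ'`. -/
def poincareDeficit (h : Sph d → ℝ) (p : Sph d × Sph d) : ℝ :=
  ⟪sphGrad h p.1, (p.2 : E d)⟫ ^ 2 - (h p.2 - h p.1) ^ 2

theorem poincareDeficit_nonneg_of_eq {p : Sph d × Sph d} (hp : h p.2 = h p.1) :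
    0 ≤ poincareDeficit h p := by
  rw [poincareDeficit, hp, sub_self]
  nlinarith

theorem SphSmooth.continuous_poincareDeficit (hh : SphSmooth h) :
    Continuous (poincareDeficit h) := by
  have hcont := hh.continuous
  have hgrad := hh.continuous_sphGrad
  unfold poincareDeficit
  fun_prop

theorem SphSmooth.integral_poincareDeficit_greatCircle_nonneg (hh : SphSmooth h)
    (heven : ∀ σ, h (-σ) = h σ) {v w : Sph d} (hvw : ⟪(v : E d), (w : E d)⟫ = 0) (θ : ℝ) :
    0 ≤ ∫ s in (0 : ℝ)..Real.pi,
      poincareDeficit h (greatCircle v w hvw s, greatCircle v w hvw (s + θ)) := by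
  have hγ := continuous_greatCircle hvw
  have hcont := hh.continuous
  have hgrad := hh.continuous_sphGrad
  simp only [poincareDeficit]
  rw [intervalIntegral.integral_sub (Continuous.intervalIntegrable (by fun_prop) _ _)
    (Continuous.intervalIntegrable (by fun_prop) _ _), sub_nonneg]
  exact hh.integral_sub_greatCircle_sq_le hvw heven θ

theorem SphSmooth.exists_orbit_curve_integral_poincareDeficit_nonneg (hh : SphSmooth h)
    (heven : ∀ σ, h (-σ) = h σ) (p : Sph d × Sph d) :
    ∃ c : ℝ → Sph d × Sph d, Continuous c ∧ (∀ s, c s ∈ MulAction.orbit (OrthGroup d) p) ∧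
      ∀ g : OrthGroup d, 0 ≤ ∫ s in (0 : ℝ)..Real.pi, poincareDeficit h (g • c s) := by
  obtain ⟨σ, σ'⟩ := p
  by_cases hne : σ' = σ ∨ σ' = -σ
  · refine ⟨fun _ => (σ, σ'), continuous_const, fun _ => MulAction.mem_orbit_self _, fun g =>
      intervalIntegral.integral_nonneg Real.pi_pos.le fun _ _ => poincareDeficit_nonneg_of_eq ?_⟩
    change h (g • σ') = h (g • σ)
    obtain rfl | rfl := hne
    · rfl
    · rw [OrthGroup.smul_neg, heven]
  · obtain ⟨w, hw, θ, rfl⟩ := exists_greatCircle_eq (not_or.1 hne).1 (not_or.1 hne).2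
    have hγ := continuous_greatCircle hw
    refine ⟨fun s => (greatCircle σ w hw s, greatCircle σ w hw (s + θ)), by fun_prop,
      fun s => ?_, fun g => ?_⟩
    · obtain ⟨g, hg⟩ := exists_smul_greatCircle_eq_add hw s
      exact ⟨g, Prod.ext (by simpa [greatCircle_zero] using hg 0) (hg θ)⟩
    · simp only [Prod.smul_mk, smul_greatCircle]
      exact hh.integral_poincareDeficit_greatCircle_nonneg heven _ θ

theorem natCast_mul_integral_inner_sphGrad_sq (hgrad : Continuous (sphGrad h)) :
    d * ∫ p : Sph d × Sph d, ⟪sphGrad h p.1, (p.2 : E d)⟫ ^ 2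
        ∂((sphMeasure d).prod (sphMeasure d))
      = (sphMeasure d).real Set.univ * dirichletEnergy h := by
  rw [integral_prod _ (integrable_of_continuous_of_compactSpace _ (by fun_prop)),
    ← integral_const_mul]
  simp only [natCast_mul_integral_inner_sq, integral_const_mul, dirichletEnergy]

theorem SphSmooth.poincare_of_even (hh : SphSmooth h) (heven : ∀ σ, h (-σ) = h σ) :
    d * pairVariance (sphMeasure d) h
      ≤ (sphMeasure d).real Set.univ * dirichletEnergy h := by
  have hcont := hh.continuous
  have hgrad := hh.continuous_sphGrad
  have hdeficit := integral_nonneg_of_forall_exists_orbit_curve (G := OrthGroup d)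
    ((sphMeasure d).prod (sphMeasure d)) hh.continuous_poincareDeficit Real.pi_pos
    (hh.exists_orbit_curve_integral_poincareDeficit_nonneg heven)
  simp only [poincareDeficit] at hdeficit
  rw [integral_sub (integrable_of_continuous_of_compactSpace _ (by fun_prop))
    (integrable_of_continuous_of_compactSpace _ (by fun_prop)), sub_nonneg] at hdeficit
  rw [← natCast_mul_integral_inner_sphGrad_sq hgrad]
  simp only [pairVariance, sub_sq_comm (h (Prod.fst _))]
  gcongr

end Poincare

section QuarticDefect

/-- The term by which `(y² - x²)² / (x² + y²)` falls short of `2 (x - y)²`. -/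
def quarticDefect (x y : ℝ) : ℝ := (x - y) ^ 4 / (x ^ 2 + y ^ 2)

variable {x y z : ℝ}

theorem quarticDefect_nonneg (x y : ℝ) : 0 ≤ quarticDefect x y := by
  unfold quarticDefect
  positivity

theorem sq_sub_sq_sq_div_add (hx : x ≠ 0) :
    (y ^ 2 - x ^ 2) ^ 2 / (y ^ 2 + x ^ 2) = 2 * (x - y) ^ 2 - quarticDefect x y := by
  have : x ^ 2 + y ^ 2 ≠ 0 := by positivity
  rw [quarticDefect, add_comm (y ^ 2)]
  field_simp
  ring

theorem sub_sq_le_quarticDefect_of_two_mul_le (hx : 0 < x) (h : 2 * x ≤ y) :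
    (x - y) ^ 2 ≤ 5 * quarticDefect x y := by
  rw [quarticDefect, ← mul_div_assoc, le_div_iff₀ (by positivity)]
  have hratio : x ^ 2 + y ^ 2 ≤ 5 * (x - y) ^ 2 := by nlinarith
  nlinarith [mul_le_mul_of_nonneg_left hratio (sq_nonneg (x - y))]

theorem sq_le_quarticDefect_of_four_mul_le (hx : 0 < x) (hz : 0 ≤ z) (h : 4 * z ≤ x) :
    x ^ 2 ≤ 5 * quarticDefect x z := by
  have hnum : (3 / 4 * x) ^ 4 ≤ (x - z) ^ 4 := pow_le_pow_left₀ (by positivity) (by linarith) 4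
  have hden : x ^ 2 + z ^ 2 ≤ 17 / 16 * x ^ 2 := by nlinarith
  rw [quarticDefect, ← mul_div_assoc, le_div_iff₀ (by positivity)]
  nlinarith [mul_le_mul_of_nonneg_left hden (sq_nonneg x), pow_pos hx 4]

theorem abs_sub_le_max_mul_abs_log_sub (hx : 0 < x) (hy : 0 < y) :
    |x - y| ≤ max x y * |Real.log x - Real.log y| := by
  wlog h : y ≤ x generalizing x y
  · rw [abs_sub_comm, max_comm, abs_sub_comm (Real.log x)]
    exact this hy hx (le_of_not_ge h)
  have hlog : 1 - y / x ≤ Real.log x - Real.log y := by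
    rw [← Real.log_div hx.ne' hy.ne', ← inv_div x y]
    exact Real.one_sub_inv_le_log_of_pos (div_pos hx hy)
  rw [max_eq_left h, abs_of_nonneg (sub_nonneg.2 h)]
  calc x - y = x * (1 - y / x) := by field_simp
    _ ≤ x * |Real.log x - Real.log y| := by
      gcongr
      exact hlog.trans (le_abs_self _)

theorem sub_sq_le_sq_mul_log_sub_sq {r : ℝ} (hx : 0 < x) (hy : 0 < y) (hxr : x ≤ r)
    (hyr : y ≤ r) : (x - y) ^ 2 ≤ r ^ 2 * (Real.log x - Real.log y) ^ 2 := by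
  rw [← sq_abs (x - y), ← sq_abs (Real.log x - _), ← mul_pow]
  gcongr
  exact (abs_sub_le_max_mul_abs_log_sub hx hy).trans (by gcongr; exact max_le hxr hyr)

-- If `y` is much larger than `x`, or `x` than `z`, a defect dominates; otherwise `x, y ≤ 8 z`.
theorem sub_sq_le_quarticDefect_add_log (hx : 0 < x) (hy : 0 < y) (hz : 0 < z) :
    (x - y) ^ 2 ≤ 5 * quarticDefect x y + 5 * quarticDefect x z
      + 64 * z ^ 2 * (Real.log x - Real.log y) ^ 2 := by
  have hxy := quarticDefect_nonneg x y
  have hxz := quarticDefect_nonneg x z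
  have hlog : 0 ≤ 64 * z ^ 2 * (Real.log x - Real.log y) ^ 2 := by positivity
  rcases le_or_gt (2 * x) y with hy_large | hy_small
  · linarith [sub_sq_le_quarticDefect_of_two_mul_le hx hy_large]
  rcases le_or_gt (4 * z) x with hx_large | hx_small
  · have hsq : (x - y) ^ 2 ≤ x ^ 2 := by nlinarith
    linarith [sq_le_quarticDefect_of_four_mul_le hx hz.le hx_large]
  · have := sub_sq_le_sq_mul_log_sub_sq (r := 8 * z) hx hy (by linarith) (by linarith)
    linarith

end QuarticDefect

section PairVariance

variable {X : Type*} [MeasurableSpace X]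

/-- The quartic defect of a function integrated over all pairs of points. -/
def pairQuarticDefect (μ : Measure X) (x : X → ℝ) : ℝ :=
  ∫ p, quarticDefect (x p.1) (x p.2) ∂(μ.prod μ)

theorem pairQuarticDefect_nonneg (μ : Measure X) (x : X → ℝ) : 0 ≤ pairQuarticDefect μ x :=
  integral_nonneg fun _ => quarticDefect_nonneg _ _

variable [TopologicalSpace X] {x : X → ℝ}

theorem continuous_quarticDefect {Y : Type*} [TopologicalSpace Y] {u v : Y → ℝ}
    (hu : Continuous u) (hv : Continuous v) (hpos : ∀ p, 0 < u p) :
    Continuous fun p => quarticDefect (u p) (v p) :=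
  Continuous.div (by fun_prop) (by fun_prop) fun p => by
    have := hpos p
    positivity

variable [CompactSpace X] [SecondCountableTopology X] [BorelSpace X] (μ : Measure X)
  [IsFiniteMeasure μ]

theorem pairVariance_le_quarticDefect_add_log_at (hx : Continuous x) (hpos : ∀ s, 0 < x s) {z : ℝ}
    (hz : 0 < z) : pairVariance μ x ≤ 5 * pairQuarticDefect μ x
      + 5 * (μ.real Set.univ * ∫ s, quarticDefect (x s) z ∂μ)
      + 64 * z ^ 2 * pairVariance μ fun s => Real.log (x s) := by
  have hlog : Continuous fun s => Real.log (x s) := hx.log fun s => (hpos s).ne'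
  have hpair : Integrable (fun p : X × X => quarticDefect (x p.1) (x p.2)) (μ.prod μ) :=
    integrable_of_continuous_of_compactSpace _ <|
      continuous_quarticDefect (by fun_prop) (by fun_prop) fun p => hpos p.1
  have hpoint : Integrable (fun p : X × X => quarticDefect (x p.1) z) (μ.prod μ) :=
    integrable_of_continuous_of_compactSpace _ <|
      continuous_quarticDefect (by fun_prop) (by fun_prop) fun p => hpos p.1
  have hlogpair : Integrable (fun p : X × X => (Real.log (x p.1) - Real.log (x p.2)) ^ 2)
      (μ.prod μ) := integrable_of_continuous_of_compactSpace _ <|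
    ((hlog.comp continuous_fst).sub (hlog.comp continuous_snd)).pow 2
  have hdefects : Integrable (fun p : X × X =>
      5 * quarticDefect (x p.1) (x p.2) + 5 * quarticDefect (x p.1) z) (μ.prod μ) :=
    (hpair.const_mul 5).add (hpoint.const_mul 5)
  calc pairVariance μ x
      ≤ ∫ p : X × X, (5 * quarticDefect (x p.1) (x p.2) + 5 * quarticDefect (x p.1) z
          + 64 * z ^ 2 * (Real.log (x p.1) - Real.log (x p.2)) ^ 2) ∂(μ.prod μ) :=
        integral_mono (integrable_of_continuous_of_compactSpace _ (by fun_prop))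
          (hdefects.add (hlogpair.const_mul _))
          fun p => sub_sq_le_quarticDefect_add_log (hpos p.1) (hpos p.2) hz
    _ = _ := by
      rw [integral_add hdefects (hlogpair.const_mul _),
        integral_add (hpair.const_mul 5) (hpoint.const_mul 5)]
      simp only [integral_const_mul, integral_fun_fst fun s => quarticDefect (x s) z, smul_eq_mul,
        pairVariance, pairQuarticDefect]

theorem pairVariance_le_quarticDefect_add_log (hx : Continuous x) (hpos : ∀ s, 0 < x s) :
    pairVariance μ x ≤ 10 * pairQuarticDefect μ x
      + 64 * (⨍ s, x s ^ 2 ∂μ) * pairVariance μ fun s => Real.log (x s) := by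
  rcases eq_zero_or_neZero μ with rfl | hμ
  · simp [pairVariance, pairQuarticDefect]
  have hmass : 0 < μ.real Set.univ := measureReal_univ_pos
  have hpair : Integrable (fun p : X × X => quarticDefect (x p.1) (x p.2)) (μ.prod μ) :=
    integrable_of_continuous_of_compactSpace _ <|
      continuous_quarticDefect (by fun_prop) (by fun_prop) fun p => hpos p.1
  have hpoint : Integrable (fun t => μ.real Set.univ * ∫ s, quarticDefect (x s) (x t) ∂μ) μ :=
    hpair.integral_prod_right.const_mul _
  have hsq : Integrable (fun t => x t ^ 2) μ :=
    integrable_of_continuous_of_compactSpace _ (hx.pow 2)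
  have hdefects : Integrable (fun t => 5 * pairQuarticDefect μ x
      + 5 * (μ.real Set.univ * ∫ s, quarticDefect (x s) (x t) ∂μ)) μ :=
    (integrable_const _).add (hpoint.const_mul 5)
  have hlogpart : Integrable (fun t => 64 * x t ^ 2 * pairVariance μ fun s => Real.log (x s)) μ :=
    (hsq.const_mul 64).mul_const _
  refine le_of_mul_le_mul_left ?_ hmass
  calc μ.real Set.univ * pairVariance μ x = ∫ _, pairVariance μ x ∂μ := by
        rw [integral_const, smul_eq_mul]
    _ ≤ ∫ t, (5 * pairQuarticDefect μ x
          + 5 * (μ.real Set.univ * ∫ s, quarticDefect (x s) (x t) ∂μ)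
          + 64 * x t ^ 2 * pairVariance μ fun s => Real.log (x s)) ∂μ :=
        integral_mono (integrable_const _) (hdefects.add hlogpart) fun t =>
          pairVariance_le_quarticDefect_add_log_at μ hx hpos (hpos t)
    _ = _ := by
      rw [integral_add hdefects hlogpart, integral_add (integrable_const _) (hpoint.const_mul 5)]
      simp only [integral_const_mul, integral_mul_const, integral_const, smul_eq_mul,
        ← integral_prod_symm _ hpair, ← measure_smul_average μ fun t => x t ^ 2]
      rw [pairQuarticDefect]
      ring

end PairVariance

section LogSobolev

variable {d : ℕ}

theorem SphSmooth.mul_pairVariance_le_quarticDefect_add_log {x : Sph d → ℝ} (hx : SphSmooth x)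
    (hpos : ∀ σ, 0 < x σ) (heven : ∀ σ, x (-σ) = x σ) :
    d * pairVariance (sphMeasure d) x ≤ 10 * d * pairQuarticDefect (sphMeasure d) x
      + 64 * (∫ σ, x σ ^ 2 ∂(sphMeasure d)) * dirichletEnergy fun σ => Real.log (x σ) := by
  have hlog : SphSmooth fun σ => Real.log (x σ) :=
    hx.comp fun σ => Real.contDiffAt_log.2 (hpos σ).ne'
  have hpoincare := hlog.poincare_of_even fun σ => by rw [heven]
  have havg : 0 ≤ ⨍ σ, x σ ^ 2 ∂(sphMeasure d) := integral_nonneg fun σ => sq_nonneg (x σ)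
  calc d * pairVariance (sphMeasure d) x
      ≤ d * (10 * pairQuarticDefect (sphMeasure d) x + 64 * (⨍ σ, x σ ^ 2 ∂(sphMeasure d))
          * pairVariance (sphMeasure d) fun σ => Real.log (x σ)) := by
        gcongr
        exact pairVariance_le_quarticDefect_add_log _ hx.continuous hpos
    _ = 10 * d * pairQuarticDefect (sphMeasure d) x + 64 * (⨍ σ, x σ ^ 2 ∂(sphMeasure d))
          * (d * pairVariance (sphMeasure d) fun σ => Real.log (x σ)) := by ring
    _ ≤ 10 * d * pairQuarticDefect (sphMeasure d) x + 64 * (⨍ σ, x σ ^ 2 ∂(sphMeasure d))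
          * ((sphMeasure d).real Set.univ * dirichletEnergy fun σ => Real.log (x σ)) := by gcongr
    _ = _ := by
      rw [← measure_smul_average (sphMeasure d) fun σ => x σ ^ 2, smul_eq_mul]
      ring

theorem SphSmooth.mul_two_pairVariance_sub_quarticDefect_le {x : Sph d → ℝ} (hx : SphSmooth x)
    (hpos : ∀ σ, 0 < x σ) (heven : ∀ σ, x (-σ) = x σ) :
    d * (65 / 64) * (2 * pairVariance (sphMeasure d) x - pairQuarticDefect (sphMeasure d) x)
      ≤ 2 * ((∫ σ, x σ ^ 2 ∂(sphMeasure d)) * dirichletEnergy (fun σ => Real.log (x σ))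
        + (sphMeasure d).real Set.univ * dirichletEnergy x) := by
  have hdefect : 0 ≤ d * pairQuarticDefect (sphMeasure d) x :=
    mul_nonneg d.cast_nonneg (pairQuarticDefect_nonneg _ x)
  linarith [hx.poincare_of_even heven, hx.mul_pairVariance_le_quarticDefect_add_log hpos heven]

theorem integral_integral_sq_sub_div_add_eq {X : Type*} [TopologicalSpace X] [CompactSpace X]
    [SecondCountableTopology X] [MeasurableSpace X] [BorelSpace X] (μ : Measure X)
    [IsFiniteMeasure μ] {f : X → ℝ} (hf : Continuous f) (hpos : ∀ s, 0 < f s) :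
    ∫ s, ∫ t, (f t - f s) ^ 2 / (f t + f s) ∂μ ∂μ
      = 2 * pairVariance μ (fun s => √(f s)) - pairQuarticDefect μ fun s => √(f s) := by
  have hsqrt (s : X) : 0 < √(f s) := Real.sqrt_pos.2 (hpos s)
  have hkernel (s t : X) : (f t - f s) ^ 2 / (f t + f s)
      = 2 * (√(f s) - √(f t)) ^ 2 - quarticDefect √(f s) √(f t) := by
    rw [← sq_sub_sq_sq_div_add (hsqrt s).ne', Real.sq_sqrt (hpos s).le, Real.sq_sqrt (hpos t).le]
  have hvar : Integrable (fun p : X × X => 2 * (√(f p.1) - √(f p.2)) ^ 2) (μ.prod μ) :=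
    integrable_of_continuous_of_compactSpace _ (by fun_prop)
  have hdefect : Integrable (fun p : X × X => quarticDefect √(f p.1) √(f p.2)) (μ.prod μ) :=
    integrable_of_continuous_of_compactSpace _ <|
      continuous_quarticDefect (by fun_prop) (by fun_prop) fun p => hsqrt p.1
  simp only [hkernel]
  rw [pairVariance, pairQuarticDefect, ← integral_const_mul, ← integral_sub hvar hdefect]
  exact (integral_prod _ (hvar.sub hdefect)).symm

theorem SphSmooth.norm_sphGrad_sqrt_sq {f : Sph d → ℝ} (hf : SphSmooth f) {σ : Sph d}
    (hpos : 0 < f σ) : 4 * ‖sphGrad (fun τ => √(f τ)) σ‖ ^ 2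
      = ‖sphGrad (fun τ => Real.log (f τ)) σ‖ ^ 2 * f σ := by
  rw [hf.sphGrad_comp (Real.hasDerivAt_sqrt hpos.ne'),
    hf.sphGrad_comp (Real.hasDerivAt_log hpos.ne'), norm_smul, norm_smul, mul_pow, mul_pow,
    Real.norm_eq_abs, Real.norm_eq_abs, sq_abs, sq_abs, div_pow, mul_pow, Real.sq_sqrt hpos.le]
  field_simp
  norm_num

theorem SphSmooth.dirichletEnergy_const_mul {F : Sph d → ℝ} (hF : SphSmooth F) (c : ℝ) :
    dirichletEnergy (fun σ => c * F σ) = c ^ 2 * dirichletEnergy F := by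
  have hgrad (σ : Sph d) : sphGrad (fun τ => c * F τ) σ = c • sphGrad F σ :=
    hF.sphGrad_comp (by simpa using (hasDerivAt_id (F σ)).const_mul c)
  simp only [dirichletEnergy, hgrad, norm_smul, mul_pow, Real.norm_eq_abs, sq_abs,
    integral_const_mul]

theorem sphB_const (β : ℝ) {F : Sph d → ℝ} (hF : Continuous F) (σ : Sph d) :
    sphB (fun _ => β) F σ
      = β * ((∫ τ, F τ ∂(sphMeasure d)) - (sphMeasure d).real Set.univ * F σ) := by
  rw [sphB, integral_mul_const, integral_sub (integrable_of_continuous_of_compactSpace _ hF)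
    (integrable_const _), integral_const, smul_eq_mul, mul_comm]

theorem Gamma2BD_const (β : ℝ) {g : Sph d → ℝ} (hg : SphSmooth g) (σ : Sph d) :
    Gamma2BD (fun _ => β) g σ = β / 2 * (dirichletEnergy g
      + (sphMeasure d).real Set.univ * ‖sphGrad g σ‖ ^ 2) := by
  have hderiv : HasDerivAt (fun t => β * ((∫ τ, g τ ∂(sphMeasure d))
      - (sphMeasure d).real Set.univ * t)) (β * -((sphMeasure d).real Set.univ * 1)) (g σ) :=
    (((hasDerivAt_id (g σ)).const_mul _).const_sub _).const_mul β
  rw [Gamma2BD, sphB_const β (F := fun τ => ‖sphGrad g τ‖ ^ 2) (hg.continuous_sphGrad.norm.pow 2)]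
  simp only [sphB_const β hg.continuous]
  rw [hg.sphGrad_comp hderiv, real_inner_smul_right, real_inner_self_eq_norm_sq, dirichletEnergy]
  ring

theorem SphSmooth.integral_Gamma2BD_const_log_mul (β : ℝ) {f : Sph d → ℝ} (hf : SphSmooth f)
    (hpos : ∀ σ, 0 < f σ) :
    ∫ σ, Gamma2BD (fun _ => β) (fun τ => Real.log (f τ)) σ * f σ ∂(sphMeasure d)
      = β / 2 * ((∫ σ, f σ ∂(sphMeasure d)) * dirichletEnergy (fun σ => Real.log (f σ))
        + 4 * ((sphMeasure d).real Set.univ * dirichletEnergy fun σ => √(f σ))) := by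
  have hlog : SphSmooth fun τ => Real.log (f τ) :=
    hf.comp fun σ => Real.contDiffAt_log.2 (hpos σ).ne'
  have hsqrt : SphSmooth fun τ => √(f τ) := hf.comp fun σ => Real.contDiffAt_sqrt (hpos σ).ne'
  have hint : Integrable f (sphMeasure d) :=
    integrable_of_continuous_of_compactSpace _ hf.continuous
  have hgrad : Integrable (fun σ => 4 * ‖sphGrad (fun τ => √(f τ)) σ‖ ^ 2) (sphMeasure d) :=
    (integrable_of_continuous_of_compactSpace _ (hsqrt.continuous_sphGrad.norm.pow 2)).const_mul 4
  simp only [Gamma2BD_const β hlog, mul_assoc, add_mul, ← hf.norm_sphGrad_sqrt_sq (hpos _),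
    integral_const_mul]
  rw [integral_add (hint.const_mul _) (hgrad.const_mul _)]
  simp only [integral_const_mul, dirichletEnergy]
  ring

end LogSobolev

/-- For a constant kernel `b ≡ β > 0`, the log-Sobolev inequality `LS(Λ, b)`
holds for some `Λ > d`. -/
theorem logSobolev_constant_kernel
    (d : ℕ) (hd : 2 ≤ d) (β : ℝ) (hβ : 0 < β) :
    ∃ Λ : ℝ, (d : ℝ) < Λ ∧ LS d (fun _ => β) Λ := by
  have hd_pos : (0 : ℝ) < d := by positivity
  refine ⟨d * (65 / 64), by linarith, fun f hf hpos heven => ?_⟩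
  have hsqrt : SphSmooth fun σ => √(f σ) := hf.comp fun σ => Real.contDiffAt_sqrt (hpos σ).ne'
  have hsqrt_pos (σ : Sph d) : 0 < √(f σ) := Real.sqrt_pos.2 (hpos σ)
  have hlog_sqrt : SphSmooth fun σ => Real.log √(f σ) :=
    hsqrt.comp fun σ => Real.contDiffAt_log.2 (hsqrt_pos σ).ne'
  have henergy : dirichletEnergy (fun σ => Real.log (f σ))
      = 2 ^ 2 * dirichletEnergy fun σ => Real.log √(f σ) := by
    rw [← hlog_sqrt.dirichletEnergy_const_mul]
    exact congrArg _ <| funext fun σ => by rw [Real.log_sqrt (hpos σ).le]; ring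
  have hkey := hsqrt.mul_two_pairVariance_sub_quarticDefect_le hsqrt_pos fun σ => by rw [heven]
  simp only [Real.sq_sqrt (hpos _).le] at hkey
  simp only [integral_mul_const]
  rw [integral_integral_sq_sub_div_add_eq _ hf.continuous hpos,
    hf.integral_Gamma2BD_const_log_mul β hpos, henergy]
  linarith [mul_le_mul_of_nonneg_left hkey hβ.le]
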